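/- For every integer n ≥ 3, a*(n) = √3/2 + ((n−2)/2)·sin(2π/(3(n−2))), where a*(n) is the supremum of the areas of convex polygons with at most n vertices inscribed in M. -/

import Mathlib

open Metric MeasureTheory Real

noncomputable section

/-- The Euclidean plane. -/
abbrev Pt := EuclideanSpace ℝ (Fin 2)

/-- The set `M`: the closed unit disk truncated by two chords of length `√3` sharing the
endpoint `(0, −1)`. -/
def M : Set Pt :=
  {p | p 0 ^ 2 + p 1 ^ 2 ≤ 1 ∧ Real.sqrt 3 * p 0 - p 1 ≤ 1 ∧ -Real.sqrt 3 * p 0 - p 1 ≤ 1}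

/-- `a*(n)`: the supremum of the areas of convex polygons with at most `n` vertices inscribed
in `M`. -/
def astar (n : ℕ) : ℝ :=
  sSup {a : ℝ | ∃ S : Finset Pt, (S : Set Pt) ⊆ M ∧ S.card ≤ n ∧
    a = (volume (convexHull ℝ (S : Set Pt))).toReal}

def crs (a b c : Pt) : ℝ := (b 0 - a 0) * (c 1 - a 1) - (b 1 - a 1) * (c 0 - a 0)

def stdTri : Set Pt := {p | 0 ≤ p 0 ∧ 0 ≤ p 1 ∧ p 0 + p 1 ≤ 1}

lemma vol_stdTri : volume stdTri = ENNReal.ofReal (1/2) := by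
  have e := (EuclideanSpace.volume_preserving_symm_measurableEquiv_toLp (Fin 2)).symm
  have e2 := (volume_preserving_finTwoArrow ℝ).symm
  have e3 := e.comp e2
  have hcl : IsClosed stdTri := by
    have h1 : IsClosed {p : Pt | 0 ≤ p 0} := isClosed_le (by fun_prop) (by fun_prop)
    have h2 : IsClosed {p : Pt | 0 ≤ p 1} := isClosed_le (by fun_prop) (by fun_prop)
    have h3 : IsClosed {p : Pt | p 0 + p 1 ≤ 1} := isClosed_le (by fun_prop) (by fun_prop)
    exact h1.inter (h2.inter h3)
  rw [← e3.measure_preimage hcl.measurableSet.nullMeasurableSet]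
  rw [Measure.volume_eq_prod, Measure.prod_apply (e3.measurable hcl.measurableSet)]
  have : ∀ x : ℝ, volume (Prod.mk x ⁻¹' ((⇑(MeasurableEquiv.toLp 2 (Fin 2 → ℝ)).symm.symm ∘ ⇑MeasurableEquiv.finTwoArrow.symm) ⁻¹' stdTri)) = (Set.Icc (0:ℝ) 1).indicator (fun x => ENNReal.ofReal (1 - x)) x := by
    intro x
    by_cases hx : x ∈ Set.Icc (0:ℝ) 1
    · rw [Set.indicator_of_mem hx]
      have : (Prod.mk x ⁻¹' ((⇑(MeasurableEquiv.toLp 2 (Fin 2 → ℝ)).symm.symm ∘ ⇑MeasurableEquiv.finTwoArrow.symm) ⁻¹' stdTri)) = Set.Icc 0 (1 - x) := by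
        ext y
        simp [stdTri, MeasurableEquiv.finTwoArrow]
        constructor
        · rintro ⟨_, h1, h2⟩; exact ⟨h1, by linarith⟩
        · rintro ⟨h1, h2⟩; exact ⟨hx.1, h1, by linarith⟩
      rw [this, Real.volume_Icc, sub_zero]
    · rw [Set.indicator_of_notMem hx]
      have : (Prod.mk x ⁻¹' ((⇑(MeasurableEquiv.toLp 2 (Fin 2 → ℝ)).symm.symm ∘ ⇑MeasurableEquiv.finTwoArrow.symm) ⁻¹' stdTri)) = ∅ := by
        ext y
        simp [stdTri, MeasurableEquiv.finTwoArrow]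
        intro h1 h2
        by_contra h
        exact hx ⟨h1, by linarith⟩
      rw [this, measure_empty]
  rw [lintegral_congr this, lintegral_indicator measurableSet_Icc, ← ofReal_integral_eq_lintegral_ofReal]
  · rw [integral_Icc_eq_integral_Ioc, ← intervalIntegral.integral_of_le zero_le_one]
    congr 1
    rw [intervalIntegral.integral_sub (by simp) (by simp)]
    simp
    norm_num
  · exact (by fun_prop : Continuous fun x : ℝ => 1 - x).continuousOn.integrableOn_Icc
  · refine (ae_restrict_iff' measurableSet_Icc).2 (Filter.Eventually.of_forall fun x hx => ?_)
    simpa using hx.2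

lemma mem_tri (a b c x : Pt) : x ∈ convexHull ℝ ({a, b, c} : Set Pt) ↔
    ∃ u v : ℝ, 0 ≤ u ∧ 0 ≤ v ∧ u + v ≤ 1 ∧ x = a + u • (b - a) + v • (c - a) := by
  constructor
  · intro hx
    refine convexHull_min (t := {x | ∃ u v : ℝ, 0 ≤ u ∧ 0 ≤ v ∧ u + v ≤ 1 ∧ x = a + u • (b - a) + v • (c - a)}) ?_ ?_ hx
    · rintro y (rfl | rfl | rfl)
      · exact ⟨0, 0, by simp⟩
      · exact ⟨1, 0, by simp⟩
      · exact ⟨0, 1, by simp⟩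
    · rintro x ⟨u, v, hu, hv, huv, rfl⟩ y ⟨u', v', hu', hv', huv', rfl⟩ s t hs ht hst
      refine ⟨s * u + t * u', s * v + t * v', by positivity, by positivity, by nlinarith, ?_⟩
      obtain rfl : s = 1 - t := by linarith
      module
  · rintro ⟨u, v, hu, hv, huv, rfl⟩
    have hc := convex_convexHull ℝ ({a, b, c} : Set Pt)
    have ha : a ∈ convexHull ℝ ({a, b, c} : Set Pt) := subset_convexHull ℝ _ (by simp)
    have hb : b ∈ convexHull ℝ ({a, b, c} : Set Pt) := subset_convexHull ℝ _ (by simp)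
    have hcc : c ∈ convexHull ℝ ({a, b, c} : Set Pt) := subset_convexHull ℝ _ (by simp)
    have := hc.sum_mem (t := (Finset.univ : Finset (Fin 3))) (w := ![1 - u - v, u, v]) (z := ![a, b, c])
      (by intro i _; fin_cases i <;> simp <;> linarith) (by simp [Fin.sum_univ_three]; ring)
      (by intro i _; fin_cases i <;> simpa)
    simp only [Fin.sum_univ_three, Matrix.cons_val] at this
    convert this using 1
    module

lemma vol_tri (a b c : Pt) : volume.real (convexHull ℝ ({a, b, c} : Set Pt)) = |crs a b c| / 2 := by
  let A : Matrix (Fin 2) (Fin 2) ℝ := !![b 0 - a 0, c 0 - a 0; b 1 - a 1, c 1 - a 1]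
  let f : Pt →ₗ[ℝ] Pt := Matrix.toLin (EuclideanSpace.basisFun (Fin 2) ℝ).toBasis (EuclideanSpace.basisFun (Fin 2) ℝ).toBasis A
  have hf : ∀ x : Pt, f x = x 0 • (b - a) + x 1 • (c - a) := by
    intro x
    ext i
    have : f x = Matrix.toEuclideanLin A x := by
      simp [f, Matrix.toEuclideanLin_eq_toLin_orthonormal]
    rw [this]
    fin_cases i <;> simp [A, Matrix.toLpLin_apply, dotProduct, Fin.sum_univ_two] <;> ring
  have : convexHull ℝ ({a, b, c} : Set Pt) = (fun x => a + x) '' (f '' stdTri) := by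
    ext x
    rw [mem_tri, Set.image_image]
    constructor
    · rintro ⟨u, v, hu, hv, huv, rfl⟩
      refine ⟨!₂[u, v], ⟨by simpa, by simpa, by simpa⟩, ?_⟩
      simp only [hf]
      simp [add_assoc]
    · rintro ⟨y, ⟨h0, h1, h2⟩, rfl⟩
      exact ⟨y 0, y 1, h0, h1, h2, by simp only [hf, add_assoc]⟩
  have hd : LinearMap.det f = crs a b c := by
    simp only [f, LinearMap.det_toLin, A, Matrix.det_fin_two_of, crs]
    ring
  rw [this, measureReal_def, Set.image_add_left, measure_preimage_add, Measure.addHaar_image_linearMap, vol_stdTri, hd,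
    ENNReal.toReal_mul, ENNReal.toReal_ofReal (abs_nonneg _), ENNReal.toReal_ofReal (by norm_num)]
  ring

lemma line_null (α β c : ℝ) (h : α ≠ 0 ∨ β ≠ 0) : volume {x : Pt | α * x 0 + β * x 1 = c} = 0 := by
  let s : AffineSubspace ℝ Pt :=
    { carrier := {x : Pt | α * x 0 + β * x 1 = c}
      smul_vsub_vadd_mem' := by
        intro k p q r hp hq hr
        simp only [Set.mem_ofPred_eq] at *
        simp
        linear_combination k * hp - k * hq + hr }
  have hs : s ≠ ⊤ := by
    intro hs
    have h0 : ∀ x : Pt, α * x 0 + β * x 1 = c := by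
      intro x
      have : x ∈ s := hs ▸ AffineSubspace.mem_top ℝ Pt x
      exact this
    have h1 := h0 !₂[0, 0]
    have h2 := h0 !₂[1, 0]
    have h3 := h0 !₂[0, 1]
    simp at h1 h2 h3
    rcases h with h | h
    · exact h (by linarith)
    · exact h (by linarith)
  exact Measure.addHaar_affineSubspace volume s hs

lemma half_convex (α β c : ℝ) : Convex ℝ {x : Pt | α * x 0 + β * x 1 ≤ c} := by
  intro x hx y hy s t hs ht hst
  simp only [Set.mem_ofPred_eq] at *
  simp
  obtain rfl : s = 1 - t := by linarith
  nlinarith [mul_le_mul_of_nonneg_left hx hs, mul_le_mul_of_nonneg_left hy ht]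

lemma hull_finite {X : Set Pt} (hX : X.Finite) : volume (convexHull ℝ X) ≠ ⊤ :=
  (hX.isCompact_convexHull ℝ).measure_lt_top.ne

lemma vol_union {X Y : Set Pt} (hX : X.Finite) (hY : Y.Finite) (α β c : ℝ) (h : α ≠ 0 ∨ β ≠ 0)
    (h1 : ∀ x ∈ X, α * x 0 + β * x 1 ≤ c) (h2 : ∀ x ∈ Y, c ≤ α * x 0 + β * x 1) :
    volume.real (convexHull ℝ X ∪ convexHull ℝ Y) =
      volume.real (convexHull ℝ X) + volume.real (convexHull ℝ Y) := by
  have hd : AEDisjoint volume (convexHull ℝ X) (convexHull ℝ Y) := by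
    refine measure_mono_null ?_ (line_null α β c h)
    rintro x ⟨hx, hy⟩
    have a1 := convexHull_min (t := {x : Pt | α * x 0 + β * x 1 ≤ c}) h1 (half_convex α β c) hx
    have a2 := convexHull_min (t := {x : Pt | (-α) * x 0 + (-β) * x 1 ≤ -c})
      (fun x hx => by have := h2 x hx; simp only [Set.mem_ofPred_eq]; linarith) (half_convex (-α) (-β) (-c)) hy
    simp only [Set.mem_ofPred_eq] at *
    linarith
  rw [measureReal_def, measure_union₀ (hY.isCompact_convexHull ℝ).isClosed.measurableSet.nullMeasurableSet hd,
    ENNReal.toReal_add (hull_finite hX) (hull_finite hY)]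
  rfl

def A0 : Pt := !₂[0, -1]
def pol (r φ : ℝ) : Pt := !₂[r * cos φ, -1 + r * sin φ]

@[simp] lemma A0_0 : A0 0 = 0 := by simp [A0]
@[simp] lemma A0_1 : A0 1 = -1 := by simp [A0]
@[simp] lemma pol_0 (r φ : ℝ) : pol r φ 0 = r * cos φ := by simp [pol]
@[simp] lemma pol_1 (r φ : ℝ) : pol r φ 1 = -1 + r * sin φ := by simp [pol]

lemma disk_convex : Convex ℝ {x : Pt | x 0 ^ 2 + x 1 ^ 2 ≤ 1} := by
  intro x hx y hy s t hs ht hst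
  simp only [Set.mem_ofPred_eq] at *
  simp
  obtain rfl : s = 1 - t := by linarith
  nlinarith [mul_nonneg hs ht, mul_nonneg (mul_nonneg hs ht) (add_nonneg (sq_nonneg (x 0 - y 0)) (sq_nonneg (x 1 - y 1))), mul_le_mul_of_nonneg_left hx hs, mul_le_mul_of_nonneg_left hy ht]

lemma pol_disk {r φ : ℝ} (h0 : 0 ≤ r) (h : r ≤ 2 * sin φ) : (pol r φ) 0 ^ 2 + (pol r φ) 1 ^ 2 ≤ 1 := by
  have := sin_sq_add_cos_sq φ
  have e : (r * cos φ) ^ 2 + (-1 + r * sin φ) ^ 2 = 1 - r * (2 * sin φ - r) := by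
    linear_combination r ^ 2 * this
  simp only [pol_0, pol_1]
  rw [e]
  linarith [mul_nonneg h0 (sub_nonneg.2 h)]

lemma pol_seg {r s φ : ℝ} (h0 : 0 ≤ r) (h : r ≤ s) : pol r φ ∈ segment ℝ A0 (pol s φ) := by
  rcases (h0.trans h).eq_or_lt with hs | hs
  · obtain rfl : r = 0 := by linarith
    convert left_mem_segment ℝ A0 (pol s φ)
    ext i; fin_cases i <;> simp
  · refine ⟨1 - r / s, r / s, ?_, by positivity, by ring, ?_⟩
    · have : r / s ≤ 1 := (div_le_one hs).2 h
      linarith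
    · ext i; fin_cases i <;> simp <;> field_simp
      ring

lemma line_seg {φ : ℝ} (hφ : 0 < sin φ) {z : Pt} (hz : z 0 ^ 2 + z 1 ^ 2 ≤ 1)
    (h : (-sin φ) * z 0 + cos φ * z 1 = -cos φ) : z ∈ segment ℝ A0 (pol (2 * sin φ) φ) := by
  have hsc := sin_sq_add_cos_sq φ
  set ρ := z 0 * cos φ + (z 1 + 1) * sin φ with hρ
  have e0 : z 0 = ρ * cos φ := by
    rw [hρ]; linear_combination -(sin φ) * h - z 0 * hsc
  have e1 : z 1 = -1 + ρ * sin φ := by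
    rw [hρ]; linear_combination (cos φ) * h - (z 1 + 1) * hsc
  have ez : z = pol ρ φ := by ext i; fin_cases i <;> simp [e0, e1]
  have hq : ρ * (ρ - 2 * sin φ) ≤ 0 := by
    have e : (ρ * cos φ) ^ 2 + (-1 + ρ * sin φ) ^ 2 = 1 + ρ * (ρ - 2 * sin φ) := by
      linear_combination ρ ^ 2 * hsc
    rw [e0, e1, e] at hz; linarith
  rw [ez]
  apply pol_seg
  · by_contra hneg; push Not at hneg; nlinarith
  · by_contra hneg; push Not at hneg; nlinarith

lemma step_cover {K : Set Pt} {φ : ℝ} (hφ : 0 < sin φ) (hA : A0 ∈ K)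
    (ht : pol (2 * sin φ) φ ∈ K) {q : Pt} (hqd : q 0 ^ 2 + q 1 ^ 2 ≤ 1)
    (hd : ∀ x ∈ K, x 0 ^ 2 + x 1 ^ 2 ≤ 1)
    (hneg : ∀ x ∈ K, (-sin φ) * x 0 + cos φ * x 1 ≤ -cos φ)
    (hq : -cos φ ≤ (-sin φ) * q 0 + cos φ * q 1) :
    convexHull ℝ (insert q K) = convexHull ℝ K ∪ convexHull ℝ {A0, pol (2 * sin φ) φ, q} := by
  apply Set.Subset.antisymm
  · intro x hx
    rw [convexHull_insert ⟨_, hA⟩, mem_convexJoin] at hx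
    obtain ⟨q', rfl, y, hy, hx⟩ := hx
    have hyd := convexHull_min (t := {x : Pt | x 0 ^ 2 + x 1 ^ 2 ≤ 1}) hd disk_convex hy
    have hyn : (-sin φ) * y 0 + cos φ * y 1 ≤ -cos φ := convexHull_min hneg (half_convex (-sin φ) (cos φ) (-cos φ)) hy
    simp only [Set.mem_ofPred_eq] at hyd
    have hsegK : segment ℝ A0 (pol (2 * sin φ) φ) ⊆ convexHull ℝ K :=
      (convex_convexHull ℝ K).segment_subset (subset_convexHull ℝ _ hA) (subset_convexHull ℝ _ ht)
    have hsegT : segment ℝ A0 (pol (2 * sin φ) φ) ⊆ convexHull ℝ {A0, pol (2 * sin φ) φ, q'} :=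
      (convex_convexHull ℝ _).segment_subset (subset_convexHull ℝ _ (by simp)) (subset_convexHull ℝ _ (by simp))
    have hqT : q' ∈ convexHull ℝ {A0, pol (2 * sin φ) φ, q'} := subset_convexHull ℝ _ (by simp)
    rcases eq_or_lt_of_le hyn with he | hl
    · right
      exact (convex_convexHull ℝ _).segment_subset hqT (hsegT (line_seg hφ hyd he)) hx
    · set fy := (-sin φ) * y 0 + cos φ * y 1 with hfy
      set fq := (-sin φ) * q' 0 + cos φ * q' 1 with hfq
      have hpos : 0 < fq - fy := by linarith
      set s := (-cos φ - fy) / (fq - fy) with hs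
      have hs0 : 0 < s := div_pos (by linarith) hpos
      have hs1 : s ≤ 1 := (div_le_one hpos).2 (by linarith)
      have hsm : s * (fq - fy) = -cos φ - fy := div_mul_cancel₀ _ hpos.ne'
      set z : Pt := (1 - s) • y + s • q' with hz
      have hzd := disk_convex hyd hqd (by linarith : 0 ≤ 1 - s) hs0.le (by ring)
      have hzs : z ∈ segment ℝ A0 (pol (2 * sin φ) φ) := by
        apply line_seg hφ hzd
        simp
        rw [hfq, hfy] at hsm
        linear_combination hsm
      obtain ⟨a, b, ha, hb, hab, rfl⟩ := hx
      by_cases hc : a ≤ s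
      · left
        refine (convex_convexHull ℝ K).segment_subset hy (hsegK hzs) ⟨1 - a / s, a / s, ?_, by positivity, by ring, ?_⟩
        · have : a / s ≤ 1 := (div_le_one hs0).2 hc
          linarith
        · obtain rfl : b = 1 - a := by linarith
          rw [hz]
          have : a / s * s = a := div_mul_cancel₀ _ hs0.ne'
          have e : (1 - a / s) • y + (a / s) • ((1 - s) • y + s • q') = (1 - (a / s * s)) • y + (a / s * s) • q' := by module
          rw [e, this]; module
      · right
        push Not at hc
        have h1s : 0 < 1 - s := by linarith
        refine (convex_convexHull ℝ _).segment_subset hqT (hsegT hzs) ⟨1 - b / (1 - s), b / (1 - s), ?_, by positivity, by ring, ?_⟩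
        · have : b / (1 - s) ≤ 1 := (div_le_one h1s).2 (by linarith)
          linarith
        · obtain rfl : a = 1 - b := by linarith
          rw [hz]
          have : b / (1 - s) * (1 - s) = b := div_mul_cancel₀ _ h1s.ne'
          have e : (1 - b / (1 - s)) • q' + (b / (1 - s)) • ((1 - s) • y + s • q') = (1 - (b / (1 - s) * (1 - s))) • q' + (b / (1 - s) * (1 - s)) • y := by module
          rw [e, this]
  · apply Set.union_subset
    · exact convexHull_mono (Set.subset_insert _ _)
    · apply convexHull_mono
      rintro x (rfl | rfl | rfl)
      · exact Set.mem_insert_of_mem _ hA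
      · exact Set.mem_insert_of_mem _ ht
      · exact Set.mem_insert _ _

lemma crs_pol (r φ s ψ : ℝ) : crs A0 (pol r φ) (pol s ψ) = r * s * sin (ψ - φ) := by
  simp [crs, sin_sub]
  try ring

lemma step_vol {K : Set Pt} (hK : K.Finite) {φ : ℝ} (hφ : 0 < sin φ) (hA : A0 ∈ K)
    (ht : pol (2 * sin φ) φ ∈ K) {q : Pt} (hqd : q 0 ^ 2 + q 1 ^ 2 ≤ 1)
    (hd : ∀ x ∈ K, x 0 ^ 2 + x 1 ^ 2 ≤ 1)
    (hneg : ∀ x ∈ K, (-sin φ) * x 0 + cos φ * x 1 ≤ -cos φ)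
    (hq : -cos φ ≤ (-sin φ) * q 0 + cos φ * q 1) :
    volume.real (convexHull ℝ (insert q K)) = volume.real (convexHull ℝ K) + |crs A0 (pol (2 * sin φ) φ) q| / 2 := by
  rw [step_cover hφ hA ht hqd hd hneg hq, ← vol_tri]
  apply vol_union hK (Set.toFinite _) (-sin φ) (cos φ) (-cos φ) (Or.inl (by linarith)) hneg
  rintro x (rfl | rfl | rfl)
  · simp
  · simp; linarith
  · exact hq

/-- fan formula -/
lemma fan (r φ : ℕ → ℝ) (hm : Monotone φ) (h0 : ∀ i, 0 < φ i) (hpi : ∀ i, φ i < π)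
    (hr0 : ∀ i, 0 ≤ r i) (hr : ∀ i, r i ≤ 2 * sin (φ i)) (K : ℕ)
    (hmid : ∀ i, 0 < i → i < K → r i = 2 * sin (φ i)) :
    volume.real (convexHull ℝ (insert A0 ((fun i => pol (r i) (φ i)) '' Set.Iic K))) =
      (∑ i ∈ Finset.range K, r i * r (i + 1) * sin (φ (i + 1) - φ i)) / 2 := by
  have hsin : ∀ i j, i ≤ j → 0 ≤ sin (φ j - φ i) := fun i j hij =>
    sin_nonneg_of_nonneg_of_le_pi (by linarith [hm hij]) (by linarith [h0 i, hpi j])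
  induction K with
  | zero =>
    have : insert A0 ((fun i => pol (r i) (φ i)) '' Set.Iic 0) = {A0, pol (r 0) (φ 0), pol (r 0) (φ 0)} := by
      ext x; simp [eq_comm]
    rw [this, vol_tri, crs_pol]; simp
  | succ K ih =>
    have hI : (Set.Iic (K + 1)) = insert (K + 1) (Set.Iic K) := by
      ext i; simp; omega
    rw [Finset.sum_range_succ, add_div]
    have hnn : 0 ≤ r K * r (K + 1) * sin (φ (K + 1) - φ K) :=
      mul_nonneg (mul_nonneg (hr0 _) (hr0 _)) (hsin _ _ (by omega))
    rcases Nat.eq_zero_or_pos K with rfl | hK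
    · have : insert A0 ((fun i => pol (r i) (φ i)) '' Set.Iic (0 + 1)) = {A0, pol (r 0) (φ 0), pol (r 1) (φ 1)} := by
        rw [hI, Set.image_insert_eq]
        ext x; simp [eq_comm]; tauto
      rw [this, vol_tri, crs_pol, abs_of_nonneg hnn]; simp
    · rw [← ih (fun i hi hi' => hmid i hi (by omega)), hI, Set.image_insert_eq, Set.insert_comm]
      have hrK := hmid K hK (by omega)
      rw [step_vol (φ := φ K) ((Set.toFinite _).insert _), ← hrK, crs_pol, abs_of_nonneg hnn]
      · exact sin_pos_of_pos_of_lt_pi (h0 K) (hpi K)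
      · simp
      · rw [← hrK]; exact Set.mem_insert_of_mem _ ⟨K, by simp, rfl⟩
      · exact pol_disk (hr0 _) (hr _)
      · rintro x (rfl | ⟨i, hi, rfl⟩)
        · simp
        · exact pol_disk (hr0 _) (hr _)
      · rintro x (rfl | ⟨i, hi, rfl⟩)
        · simp
        · have := mul_nonneg (hr0 i) (hsin i K hi)
          rw [sin_sub] at this
          simp; linarith
      · have := mul_nonneg (hr0 (K+1)) (hsin K (K+1) (by omega))
        rw [sin_sub] at this
        simp; linarith

lemma tang {t τ : ℝ} (h0 : 0 ≤ t) (h1 : t ≤ π) (h2 : 0 < τ) (h3 : τ < π) :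
    sin t ≤ sin τ + cos τ * (t - τ) := by
  have hc := strictConcaveOn_sin_Icc.concaveOn
  rcases lt_trichotomy t τ with h | rfl | h
  · have := hc.le_slope_of_hasDerivAt (x := t) (y := τ) ⟨h0, h1⟩ ⟨h2.le, h3.le⟩ h (hasDerivAt_sin τ)
    rw [slope_def_field, le_div_iff₀ (by linarith)] at this
    linarith
  · simp
  · have := hc.slope_le_of_hasDerivAt (x := τ) (y := t) ⟨h2.le, h3.le⟩ ⟨h0, h1⟩ h (hasDerivAt_sin τ)
    rw [slope_def_field, div_le_iff₀ (by linarith)] at this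
    linarith

lemma sin_two_pi_three : sin (2 * π / 3) = √3 / 2 := by
  rw [show 2 * π / 3 = π - π / 3 by ring, sin_pi_sub, sin_pi_div_three]

lemma cos_two_pi_three : cos (2 * π / 3) = -(1 / 2) := by
  rw [show 2 * π / 3 = π - π / 3 by ring, cos_pi_sub, cos_pi_div_three]

lemma sqrt3_bd : 1.7 ≤ √3 := by
  apply Real.le_sqrt_of_sq_le; norm_num

lemma side {x : ℝ} (h0 : 2 * π / 3 ≤ x) (h1 : x ≤ 4 * π / 3) :
    sin x ≤ √3 / 2 - (x - 2 * π / 3) / 2 := by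
  have hp := pi_pos
  by_cases h : x ≤ π
  · have := tang (t := x) (τ := 2 * π / 3) (by linarith) h (by linarith) (by linarith)
    rw [sin_two_pi_three, cos_two_pi_three] at this
    linarith
  · push Not at h
    have h2 := mul_le_sin (x := x - π) (by linarith) (by linarith)
    rw [sin_sub_pi] at h2
    have h3 : 1 / 2 ≤ 2 / π := by
      rw [div_le_div_iff₀ (by norm_num) hp]; linarith [pi_lt_four]
    have h4 : 1 / 2 * (x - π) ≤ 2 / π * (x - π) := mul_le_mul_of_nonneg_right h3 (by linarith)
    linarith [sqrt3_bd, pi_lt_d2]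

lemma chord (a b : ℝ) : (2 * sin a) * (2 * sin b) * sin (b - a) =
    sin (2 * (b - a)) + sin (2 * a) - sin (2 * b) := by
  have ha := sin_sq_add_cos_sq a
  have hb := sin_sq_add_cos_sq b
  rw [show 2 * (b - a) = 2 * b - 2 * a by ring, sin_sub, sin_sub, sin_two_mul, sin_two_mul, cos_two_mul', cos_two_mul']
  linear_combination (-2 * sin b * cos b) * ha + (2 * sin a * cos a) * hb

lemma trig_tel (φ : ℕ → ℝ) (hm : Monotone φ) (h0 : ∀ i, π / 3 ≤ φ i) (h1 : ∀ i, φ i ≤ 2 * π / 3)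
    {τ : ℝ} (ht0 : 0 < τ) (ht1 : τ < π) (k : ℕ) :
    ∑ i ∈ Finset.range k, (2 * sin (φ i)) * (2 * sin (φ (i + 1))) * sin (φ (i + 1) - φ i) ≤
      k * (sin τ - cos τ * τ) + 2 * cos τ * (φ k - φ 0) + sin (2 * φ 0) - sin (2 * φ k) := by
  induction k with
  | zero => simp
  | succ k ih =>
    rw [Finset.sum_range_succ, chord]
    have := tang (t := 2 * (φ (k + 1) - φ k)) (by linarith [hm (Nat.le_succ k)])
      (by linarith [h0 k, h1 (k + 1), pi_pos]) ht0 ht1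
    push_cast
    linarith

lemma trig_sum (φ : ℕ → ℝ) (hm : Monotone φ) (h0 : ∀ i, π / 3 ≤ φ i) (h1 : ∀ i, φ i ≤ 2 * π / 3)
    (K : ℕ) (hK : 1 ≤ K) :
    ∑ i ∈ Finset.range K, (2 * sin (φ i)) * (2 * sin (φ (i + 1))) * sin (φ (i + 1) - φ i) ≤
      √3 + K * sin (2 * π / (3 * K)) := by
  have hp := pi_pos
  have hK' : (1 : ℝ) ≤ K := by exact_mod_cast hK
  set τ := 2 * π / (3 * K) with hτ
  have hKt : K * τ = 2 * π / 3 := by rw [hτ]; field_simp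
  have ht0 : 0 < τ := by positivity
  have ht1 : τ ≤ 2 * π / 3 := by nlinarith
  have h := trig_tel φ hm h0 h1 ht0 (by linarith) K
  have hc : -(1 / 2) ≤ cos τ := by
    rw [← cos_two_pi_three]
    exact cos_le_cos_of_nonneg_of_le_pi ht0.le (by linarith) ht1
  have s1 := side (x := 2 * φ 0) (by linarith [h0 0]) (by linarith [h1 0])
  have s2 := side (x := 2 * π - 2 * φ K) (by linarith [h1 K]) (by linarith [h0 K])
  rw [sin_two_pi_sub] at s2
  have hprod : 0 ≤ (cos τ + 1 / 2) * (2 * π / 3 - 2 * (φ K - φ 0)) :=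
    mul_nonneg (by linarith) (by linarith [h0 0, h1 K])
  have e : (K : ℝ) * (sin τ - cos τ * τ) = K * sin τ - cos τ * (2 * π / 3) := by
    rw [← hKt]; ring
  rw [e] at h
  linarith

lemma target_bd (N : ℕ) (hN : 1 ≤ N) : 2 * π / 3 ≤ √3 + N * sin (2 * π / (3 * N)) := by
  have hp := pi_pos
  have h3 := sqrt3_bd
  have h4 := pi_lt_d2
  rcases hN.eq_or_lt with rfl | h
  · simp only [Nat.cast_one, mul_one, one_mul, sin_two_pi_three]; linarith
  · have hN' : (2 : ℝ) ≤ N := by exact_mod_cast h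
    have : 2 / π * (2 * π / (3 * N)) ≤ sin (2 * π / (3 * N)) := by
      apply mul_le_sin (by positivity)
      rw [div_le_div_iff₀ (by positivity) (by norm_num)]
      nlinarith
    have e : 2 / π * (2 * π / (3 * N)) = 4 / (3 * N) := by field_simp; norm_num
    rw [e] at this
    have h5 : (N : ℝ) * (4 / (3 * N)) ≤ N * sin (2 * π / (3 * N)) := mul_le_mul_of_nonneg_left this (by positivity)
    have e2 : (N : ℝ) * (4 / (3 * N)) = 4 / 3 := by field_simp
    linarith

lemma trig_arc (φ : ℕ → ℝ) (hm : Monotone φ) (k : ℕ) :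
    ∑ i ∈ Finset.range k, (2 * sin (φ i)) * (2 * sin (φ (i + 1))) * sin (φ (i + 1) - φ i) ≤
      2 * (φ k - φ 0) + sin (2 * φ 0) - sin (2 * φ k) := by
  induction k with
  | zero => simp
  | succ k ih =>
    rw [Finset.sum_range_succ, chord]
    have := sin_le (x := 2 * (φ (k + 1) - φ k)) (by linarith [hm (Nat.le_succ k)])
    linarith

lemma upper_trig (r φ : ℕ → ℝ) (hm : Monotone φ) (h0 : ∀ i, π / 3 ≤ φ i) (h1 : ∀ i, φ i ≤ 2 * π / 3)
    (hr0 : ∀ i, 0 ≤ r i) (hr : ∀ i, r i ≤ 2 * sin (φ i)) (k : ℕ)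
    (hmid : ∀ i, 0 < i → i < k + 2 → r i = 2 * sin (φ i)) :
    ∑ i ∈ Finset.range (k + 2), r i * r (i + 1) * sin (φ (i + 1) - φ i)
      - r 0 * r (k + 2) * sin (φ (k + 2) - φ 0) ≤ √3 + (k + 1 : ℕ) * sin (2 * π / (3 * (k + 1 : ℕ))) := by
  have hp := pi_pos
  set T := √3 + (k + 1 : ℕ) * sin (2 * π / (3 * (k + 1 : ℕ))) with hT
  have b1 := trig_sum (fun i => φ (i + 1)) (fun i j h => hm (by omega)) (fun i => h0 _) (fun i => h1 _) (k + 1) (by omega)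
  have b2 := trig_sum φ hm h0 h1 (k + 1) (by omega)
  have b3 := trig_arc φ hm (k + 2)
  have b4 := target_bd (k + 1) (by omega)
  have c0 := chord (φ 0) (φ (k + 2))
  have hs : 0 ≤ sin (2 * (φ (k + 2) - φ 0)) :=
    sin_nonneg_of_nonneg_of_le_pi (by linarith [hm (Nat.zero_le (k + 2))]) (by linarith [h0 0, h1 (k + 2)])
  have hg : 0 ≤ sin (φ (k + 2) - φ 0) :=
    sin_nonneg_of_nonneg_of_le_pi (by linarith [hm (Nat.zero_le (k + 2))]) (by linarith [h0 0, h1 (k + 2)])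
  rw [← hT] at b1 b2 b4
  set Mid := ∑ i ∈ Finset.range k, (2 * sin (φ (i + 1))) * (2 * sin (φ (i + 1 + 1))) * sin (φ (i + 1 + 1) - φ (i + 1)) with hMid
  have hM : ∑ i ∈ Finset.range k, r (i + 1) * r (i + 1 + 1) * sin (φ (i + 1 + 1) - φ (i + 1)) = Mid := by
    apply Finset.sum_congr rfl
    intro i hi
    rw [Finset.mem_range] at hi
    rw [hmid (i + 1) (by omega) (by omega), hmid (i + 1 + 1) (by omega) (by omega)]
  rw [Finset.sum_range_succ, ← hMid] at b1
  rw [Finset.sum_range_succ', ← hMid] at b2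
  rw [Finset.sum_range_succ, Finset.sum_range_succ', ← hMid] at b3
  rw [Finset.sum_range_succ, Finset.sum_range_succ', hM]
  simp only [zero_add, show k + 1 + 1 = k + 2 from rfl] at *
  rw [hmid 1 (by omega) (by omega), hmid (k + 1) (by omega) (by omega)]
  have b3' := h0 0
  have b3'' := h1 (k + 2)
  have r0 := hr0 0
  have r1 := hr0 (k + 2)
  have q0 := hr 0
  have q1 := hr (k + 2)
  generalize r 0 = x at *
  generalize r (k + 2) = y at *
  generalize 2 * sin (φ 0) = X at *
  generalize 2 * sin (φ (k + 2)) = Y at *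
  generalize sin (φ (k + 2) - φ 0) = g at *
  have ha : X * (2 * sin (φ 1)) * sin (φ 1 - φ 0) = X * ((2 * sin (φ 1)) * sin (φ 1 - φ 0)) := by ring
  have ha' : x * (2 * sin (φ 1)) * sin (φ 1 - φ 0) = x * ((2 * sin (φ 1)) * sin (φ 1 - φ 0)) := by ring
  have hb : 2 * sin (φ (k + 1)) * Y * sin (φ (k + 2) - φ (k + 1)) = Y * ((2 * sin (φ (k + 1))) * sin (φ (k + 2) - φ (k + 1))) := by ring
  have hb' : 2 * sin (φ (k + 1)) * y * sin (φ (k + 2) - φ (k + 1)) = y * ((2 * sin (φ (k + 1))) * sin (φ (k + 2) - φ (k + 1))) := by ring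
  have hbn : 0 ≤ (2 * sin (φ (k + 1))) * sin (φ (k + 2) - φ (k + 1)) :=
    mul_nonneg (by linarith [hr0 (k + 1), hr (k + 1)])
      (sin_nonneg_of_nonneg_of_le_pi (by linarith [hm (show k + 1 ≤ k + 2 by omega)]) (by linarith [h0 (k + 1), h1 (k + 2)]))
  rw [ha] at b2 b3
  rw [hb] at b1 b3
  rw [ha', hb']
  generalize (2 * sin (φ 1)) * sin (φ 1 - φ 0) = a at *
  generalize (2 * sin (φ (k + 1))) * sin (φ (k + 2) - φ (k + 1)) = b at *
  have b5 : Mid + X * a + Y * b - X * Y * g ≤ T := by linarith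
  clear b3 c0 hMid hT hM
  rcases le_total (a - g * y) 0 with h | h
  · have e1 : x * (a - g * y) ≤ 0 := mul_nonpos_of_nonneg_of_nonpos r0 h
    have e2 : y * b ≤ Y * b := mul_le_mul_of_nonneg_right q1 hbn
    linarith
  · have e1 : x * (a - g * y) ≤ X * (a - g * y) := mul_le_mul_of_nonneg_right q0 h
    rcases le_total (b - g * X) 0 with h' | h'
    · have e2 : y * (b - g * X) ≤ 0 := mul_nonpos_of_nonneg_of_nonpos r1 h'
      linarith
    · have e2 : y * (b - g * X) ≤ Y * (b - g * X) := mul_le_mul_of_nonneg_right q1 h'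
      linarith

lemma upper (r φ : ℕ → ℝ) (hm : Monotone φ) (h0 : ∀ i, π / 3 ≤ φ i) (h1 : ∀ i, φ i ≤ 2 * π / 3)
    (hr0 : ∀ i, 0 ≤ r i) (hr : ∀ i, r i ≤ 2 * sin (φ i)) (k : ℕ) :
    volume.real (convexHull ℝ ((fun i => pol (r i) (φ i)) '' Set.Iic (k + 2))) ≤
      (√3 + (k + 1 : ℕ) * sin (2 * π / (3 * (k + 1 : ℕ)))) / 2 := by
  have hp := pi_pos
  have h0' : ∀ i, 0 < φ i := fun i => by linarith [h0 i]
  have h1' : ∀ i, φ i < π := fun i => by linarith [h1 i]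
  have hsin : ∀ i j, i ≤ j → 0 ≤ sin (φ j - φ i) := fun i j hij =>
    sin_nonneg_of_nonneg_of_le_pi (by linarith [hm hij]) (by linarith [h0' i, h1' j])
  have hs0 : ∀ i, 0 ≤ 2 * sin (φ i) := fun i => (hr0 i).trans (hr i)
  have hcr : ∀ i j, i ≤ j → 0 ≤ crs A0 (pol (r i) (φ i)) (pol (r j) (φ j)) := fun i j hij => by
    rw [crs_pol]; exact mul_nonneg (mul_nonneg (hr0 _) (hr0 _)) (hsin i j hij)
  set L := pol (r 0) (φ 0) with hL
  set R := pol (r (k + 2)) (φ (k + 2)) with hR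
  by_cases hcase : ∃ j, j ≤ k + 2 ∧ 0 < crs L R (pol (r j) (φ j))
  · obtain ⟨j, hj, hpos⟩ := hcase
    have hj0 : j ≠ 0 := by
      rintro rfl
      rw [← hL] at hpos; simp [crs] at hpos
    have hjk : j ≠ k + 2 := by
      rintro rfl
      rw [← hR] at hpos; simp only [crs] at hpos; linarith
    set x := pol (r j) (φ j) with hx
    have c1 := hcr 0 j (by omega)
    have c2 := hcr j (k + 2) hj
    rw [← hL, ← hx] at c1
    rw [← hR, ← hx] at c2
    have cid : crs L R x = crs A0 L R - crs A0 x R - crs A0 L x := by simp only [crs]; ring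
    have hD : 0 < crs A0 L R := by linarith
    have hxT : x ∈ convexHull ℝ ({A0, L, R} : Set Pt) := by
      rw [mem_tri]
      refine ⟨crs A0 x R / crs A0 L R, crs A0 L x / crs A0 L R, by positivity, by positivity, ?_, ?_⟩
      · rw [← add_div, div_le_one hD]; linarith
      · ext i
        fin_cases i
        · simp
          field_simp
          simp only [crs, A0_0, A0_1]; ring
        · simp
          field_simp
          simp only [crs, A0_0, A0_1]; ring
    set e : ℕ → ℕ := fun i => if i < j then i else i + 1 with he
    have hem : Monotone e := by
      intro a b hab
      simp only [he]
      split_ifs <;> omega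
    have hfan := fan (fun i => 2 * sin (φ (e i))) (fun i => φ (e i)) (hm.comp hem) (fun i => h0' _) (fun i => h1' _)
      (fun i => hs0 _) (fun i => le_rfl) (k + 1) (fun i _ _ => rfl)
    have htr := trig_sum (fun i => φ (e i)) (hm.comp hem) (fun i => h0 _) (fun i => h1 _) (k + 1) (by omega)
    set W : Set Pt := insert A0 ((fun i => pol (2 * sin (φ (e i))) (φ (e i))) '' Set.Iic (k + 1)) with hW
    have hWc := convex_convexHull ℝ W
    have hA : A0 ∈ convexHull ℝ W := subset_convexHull ℝ _ (Set.mem_insert _ _)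
    have hmem : ∀ i, i ≤ k + 2 → i ≠ j → pol (r i) (φ i) ∈ convexHull ℝ W := by
      intro i hi hij
      have : pol (2 * sin (φ i)) (φ i) ∈ convexHull ℝ W := by
        apply subset_convexHull
        right
        by_cases h : i < j
        · exact ⟨i, by simp; omega, by simp [he, h]⟩
        · refine ⟨i - 1, by simp; omega, ?_⟩
          have h2 : e (i - 1) = i := by simp only [he]; split_ifs <;> omega
          simp only [h2]
      exact hWc.segment_subset hA this (pol_seg (hr0 i) (hr i))
    have hsub : convexHull ℝ ((fun i => pol (r i) (φ i)) '' Set.Iic (k + 2)) ⊆ convexHull ℝ W := by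
      apply convexHull_min _ hWc
      rintro _ ⟨i, hi, rfl⟩
      by_cases hij : i = j
      · subst hij
        refine convexHull_min ?_ hWc hxT
        rintro y (rfl | rfl | rfl)
        · exact hA
        · exact hmem 0 (by omega) (Ne.symm hj0)
        · exact hmem (k + 2) le_rfl (Ne.symm hjk)
      · exact hmem i hi hij
    have hWf : W.Finite := (Set.toFinite _).insert _
    have := measureReal_mono hsub (hull_finite hWf)
    rw [hfan] at this
    linarith
  · push Not at hcase
    set r' : ℕ → ℝ := fun i => if i = 0 ∨ i = k + 2 then r i else 2 * sin (φ i) with hr'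
    have hr'0 : ∀ i, 0 ≤ r' i := by
      intro i; simp only [hr']; split_ifs
      · exact hr0 i
      · exact hs0 i
    have hr'1 : ∀ i, r' i ≤ 2 * sin (φ i) := by
      intro i; simp only [hr']; split_ifs
      · exact hr i
      · exact le_rfl
    have hr'2 : ∀ i, r i ≤ r' i := by
      intro i; simp only [hr']; split_ifs
      · exact le_rfl
      · exact hr i
    have hmid : ∀ i, 0 < i → i < k + 2 → r' i = 2 * sin (φ i) := by
      intro i hi hi'
      simp only [hr']; rw [if_neg (by omega)]
    have e0 : r' 0 = r 0 := by simp [hr']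
    have e1 : r' (k + 2) = r (k + 2) := by simp [hr']
    have hfan := fan r' φ hm h0' h1' hr'0 hr'1 (k + 2) hmid
    have htr := upper_trig r' φ hm h0 h1 hr'0 hr'1 k hmid
    set W : Set Pt := insert A0 ((fun i => pol (r' i) (φ i)) '' Set.Iic (k + 2)) with hW
    have hWc := convex_convexHull ℝ W
    have hA : A0 ∈ convexHull ℝ W := subset_convexHull ℝ _ (Set.mem_insert _ _)
    have hmem : ∀ i, i ≤ k + 2 → pol (r i) (φ i) ∈ convexHull ℝ W := by
      intro i hi
      have : pol (r' i) (φ i) ∈ convexHull ℝ W :=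
        subset_convexHull ℝ _ (Or.inr ⟨i, hi, rfl⟩)
      exact hWc.segment_subset hA this (pol_seg (hr0 i) (hr'2 i))
    have hsub : convexHull ℝ ((fun i => pol (r i) (φ i)) '' Set.Iic (k + 2)) ⊆ convexHull ℝ W := by
      apply convexHull_min _ hWc
      rintro _ ⟨i, hi, rfl⟩
      exact hmem i hi
    have hsubT : convexHull ℝ ({A0, L, R} : Set Pt) ⊆ convexHull ℝ W := by
      apply convexHull_min _ hWc
      rintro y (rfl | rfl | rfl)
      · exact hA
      · exact hmem 0 (by omega)
      · exact hmem (k + 2) le_rfl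
    have hWf : W.Finite := (Set.toFinite _).insert _
    have hD := hcr 0 (k + 2) (by omega)
    have hDe := crs_pol (r 0) (φ 0) (r (k + 2)) (φ (k + 2))
    rw [← hL, ← hR] at hD hDe
    rw [e0, e1, ← hDe] at htr
    rcases hD.eq_or_lt with hD0 | hD0
    · have := measureReal_mono hsub (hull_finite hWf)
      rw [hfan] at this
      linarith
    · have hu := vol_union (X := (fun i => pol (r i) (φ i)) '' Set.Iic (k + 2)) (Y := {A0, L, R})
        (Set.toFinite _) (Set.toFinite _) (-(R 1 - L 1)) (R 0 - L 0) (-(R 1 - L 1) * L 0 + (R 0 - L 0) * L 1)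
        (by
          by_contra hcon
          push Not at hcon
          have : crs A0 L R = -(R 1 - L 1) * (A0 0 - L 0) + (R 0 - L 0) * (A0 1 - L 1) := by
            simp only [crs]; ring
          rw [hcon.1, hcon.2] at this
          simp at this
          linarith)
        (by
          rintro _ ⟨i, hi, rfl⟩
          have := hcase i hi
          simp only [crs] at this
          linarith)
        (by
          have hA' : crs L R A0 = crs A0 L R := by simp only [crs]; ring
          simp only [crs] at hA' hD0
          rintro y (rfl | rfl | rfl)
          · linarith
          · linarith
          · linarith)
      have := measureReal_mono (Set.union_subset hsub hsubT) (hull_finite hWf)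
      rw [hu, hfan, vol_tri, abs_of_pos hD0] at this
      linarith

lemma polar_exists {p : Pt} (hp : p ∈ M) : ∃ r φ : ℝ, 0 ≤ r ∧ r ≤ 2 * sin φ ∧ π / 3 ≤ φ ∧ φ ≤ 2 * π / 3 ∧ p = pol r φ := by
  obtain ⟨h1, h2, h3⟩ := hp
  have hpi := pi_pos
  set x := p 0 with hx
  set y := p 1 with hy
  have s3 : √3 ^ 2 = 3 := Real.sq_sqrt (by norm_num)
  have s0 : 0 ≤ √3 := Real.sqrt_nonneg 3
  have hy0 : 0 ≤ y + 1 := by linarith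
  have hxy : 3 * x ^ 2 ≤ (y + 1) ^ 2 := by
    nlinarith [mul_nonneg (by linarith : 0 ≤ y + 1 - √3 * x) (by linarith : 0 ≤ y + 1 + √3 * x)]
  set ρ := √(x ^ 2 + (y + 1) ^ 2) with hρ
  have hρ2 : ρ ^ 2 = x ^ 2 + (y + 1) ^ 2 := Real.sq_sqrt (by positivity)
  have hρ0 : 0 ≤ ρ := Real.sqrt_nonneg _
  rcases hρ0.eq_or_lt with h | h
  · refine ⟨0, π / 2, le_rfl, by simp, by linarith, by linarith, ?_⟩
    rw [← h] at hρ2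
    have hx0 : x = 0 := by nlinarith [sq_nonneg x, sq_nonneg (y + 1)]
    have hy0 : y = -1 := by nlinarith [sq_nonneg x, sq_nonneg (y + 1)]
    ext i; fin_cases i
    · simpa using hx0
    · simpa using hy0
  · have hle : |x / ρ| ≤ 1 / 2 := by
      rw [abs_div, abs_of_pos h, div_le_div_iff₀ h (by norm_num), one_mul]
      refine le_of_sq_le_sq ?_ hρ0
      rw [mul_pow, sq_abs]; linarith
    have hl := abs_le.1 hle
    have hc : cos (arccos (x / ρ)) = x / ρ := cos_arccos (by linarith [hl.1]) (by linarith [hl.2])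
    have hs : sin (arccos (x / ρ)) = (y + 1) / ρ := by
      have e : 1 - (x / ρ) ^ 2 = ((y + 1) / ρ) ^ 2 := by
        rw [div_pow, div_pow, hρ2]
        have : x ^ 2 + (y + 1) ^ 2 ≠ 0 := by rw [← hρ2]; positivity
        field_simp
        ring
      rw [sin_arccos, e, Real.sqrt_sq (by positivity)]
    refine ⟨ρ, arccos (x / ρ), h.le, ?_, ?_, ?_, ?_⟩
    · rw [hs, ← mul_div_assoc, le_div_iff₀ h]; nlinarith
    · have : arccos (1 / 2) = π / 3 := by
        rw [← cos_pi_div_three, arccos_cos (by linarith) (by linarith)]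
      rw [← this]; exact arccos_le_arccos hl.2
    · have : arccos (-(1 / 2)) = 2 * π / 3 := by
        rw [← cos_two_pi_three, arccos_cos (by linarith) (by linarith)]
      rw [← this]; exact arccos_le_arccos (by linarith [hl.1])
    · ext i; fin_cases i
      · simp [hc]; field_simp; rfl
      · simp [hs]; field_simp; simp [hy]

lemma upper_finset (k : ℕ) (S : Finset Pt) (hS : (S : Set Pt) ⊆ M) (hc : S.card ≤ k + 3) :
    volume.real (convexHull ℝ (S : Set Pt)) ≤
      (√3 + (k + 1 : ℕ) * sin (2 * π / (3 * (k + 1 : ℕ)))) / 2 := by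
  rcases S.eq_empty_or_nonempty with rfl | hne
  · simp
    have := target_bd (k + 1) (by omega)
    push_cast at this
    linarith [pi_pos]
  · have : Nonempty S := hne.to_subtype
    let ι : S → Fin (k + 3) := fun x => Fin.castLE hc (S.equivFin x)
    have hι : Function.Injective ι := (Fin.castLE_injective hc).comp S.equivFin.injective
    let f : Fin (k + 3) → S := Function.invFun ι
    have hf : Function.Surjective f := Function.invFun_surjective hι
    have hpol : ∀ i : Fin (k + 3), ∃ r φ : ℝ, 0 ≤ r ∧ r ≤ 2 * sin φ ∧ π / 3 ≤ φ ∧ φ ≤ 2 * π / 3 ∧ (f i : Pt) = pol r φ :=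
      fun i => polar_exists (hS (f i).2)
    choose r φ a1 a2 a3 a4 a5 using hpol
    let σ := Tuple.sort φ
    have hσ : Monotone (φ ∘ σ) := Tuple.monotone_sort φ
    let c : ℕ → Fin (k + 3) := fun i => ⟨min i (k + 2), by omega⟩
    have hcm : Monotone c := by
      intro a b hab
      simp only [c, Fin.mk_le_mk]; omega
    have hu := upper (fun i => r (σ (c i))) (fun i => φ (σ (c i))) (hσ.comp hcm) (fun i => a3 _) (fun i => a4 _)
      (fun i => a1 _) (fun i => a2 _) k
    refine le_trans (measureReal_mono (convexHull_mono ?_) (hull_finite (Set.toFinite _))) hu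
    intro x hx
    obtain ⟨i, hi⟩ := hf ⟨x, hx⟩
    refine ⟨(σ.symm i : Fin (k + 3)), ?_, ?_⟩
    · have := (σ.symm i).2
      simp only [Set.mem_Iic]; omega
    · have : c (σ.symm i : Fin (k + 3)) = σ.symm i := by
        ext; simp only [c]; have := (σ.symm i).2; omega
      simp only [this, Equiv.apply_symm_apply]
      rw [← a5, hi]

lemma pol_mem {φ : ℝ} (h0 : π / 3 ≤ φ) (h1 : φ ≤ 2 * π / 3) : pol (2 * sin φ) φ ∈ M := by
  have hp := pi_pos
  have hs : 0 ≤ 2 * sin φ := by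
    have := sin_nonneg_of_nonneg_of_le_pi (x := φ) (by linarith) (by linarith)
    linarith
  refine ⟨pol_disk hs le_rfl, ?_, ?_⟩
  · have := sin_nonneg_of_nonneg_of_le_pi (x := φ - π / 3) (by linarith) (by linarith)
    rw [sin_sub, sin_pi_div_three, cos_pi_div_three] at this
    simp only [pol_0, pol_1]
    nlinarith [mul_nonneg hs this]
  · have := sin_nonneg_of_nonneg_of_le_pi (x := φ + π / 3) (by linarith) (by linarith)
    rw [sin_add, sin_pi_div_three, cos_pi_div_three] at this
    simp only [pol_0, pol_1]
    nlinarith [mul_nonneg hs this]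

lemma lower (k : ℕ) : ∃ S : Finset Pt, (S : Set Pt) ⊆ M ∧ S.card ≤ k + 3 ∧
    (√3 + (k + 1 : ℕ) * sin (2 * π / (3 * (k + 1 : ℕ)))) / 2 = (volume (convexHull ℝ (S : Set Pt))).toReal := by
  classical
  have hp := pi_pos
  let φ : ℕ → ℝ := fun i => π / 3 + (min i (k + 1) : ℕ) * (π / (3 * (k + 1 : ℕ)))
  have hk : (0 : ℝ) < (k + 1 : ℕ) := by positivity
  have hm : Monotone φ := by
    intro a b hab
    simp only [φ]
    gcongr
  have h0 : ∀ i, π / 3 ≤ φ i := fun i => by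
    simp only [φ]
    have : 0 ≤ ((min i (k + 1) : ℕ) : ℝ) * (π / (3 * (k + 1 : ℕ))) := by positivity
    linarith
  have hend : φ (k + 1) = 2 * π / 3 := by
    simp only [φ, min_self]
    field_simp
    ring
  have h1 : ∀ i, φ i ≤ 2 * π / 3 := fun i => by
    rw [← hend]
    simp only [φ, min_self]
    gcongr
    exact min_le_right _ _
  have hst : φ 0 = π / 3 := by simp only [φ, Nat.zero_min, Nat.cast_zero]; ring
  have hs0 : ∀ i, 0 ≤ 2 * sin (φ i) := fun i => by
    have := sin_nonneg_of_nonneg_of_le_pi (x := φ i) (by linarith [h0 i]) (by linarith [h1 i])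
    linarith
  have hfan := fan (fun i => 2 * sin (φ i)) φ hm (fun i => by linarith [h0 i]) (fun i => by linarith [h1 i])
      hs0 (fun i => le_rfl) (k + 1) (fun i _ _ => rfl)
  refine ⟨insert A0 ((Finset.range (k + 2)).image fun i => pol (2 * sin (φ i)) (φ i)), ?_, ?_, ?_⟩
  · intro x hx
    simp only [Finset.coe_insert, Finset.coe_image, Set.mem_insert_iff, Set.mem_image] at hx
    rcases hx with rfl | ⟨i, _, rfl⟩
    · simp [M]
    · exact pol_mem (h0 i) (h1 i)
  · refine (Finset.card_insert_le _ _).trans ?_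
    have := Finset.card_image_le (s := Finset.range (k + 2)) (f := fun i => pol (2 * sin (φ i)) (φ i))
    rw [Finset.card_range] at this
    omega
  · have hset : ((insert A0 ((Finset.range (k + 2)).image fun i => pol (2 * sin (φ i)) (φ i)) : Finset Pt) : Set Pt)
        = insert A0 ((fun i => pol (2 * sin (φ i)) (φ i)) '' Set.Iic (k + 1)) := by
      rw [Finset.coe_insert, Finset.coe_image]
      congr 2
      ext i; simp; omega
    rw [hset]
    rw [measureReal_def] at hfan
    rw [hfan]
    congr 1
    have hterm : ∀ i ∈ Finset.range (k + 1), 2 * sin (φ i) * (2 * sin (φ (i + 1))) * sin (φ (i + 1) - φ i)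
        = sin (2 * π / (3 * (k + 1 : ℕ))) + (sin (2 * φ i) - sin (2 * φ (i + 1))) := by
      intro i hi
      rw [Finset.mem_range] at hi
      rw [chord]
      have : 2 * (φ (i + 1) - φ i) = 2 * π / (3 * (k + 1 : ℕ)) := by
        simp only [φ]
        rw [min_eq_left (by omega), min_eq_left (by omega)]
        push_cast
        ring
      rw [this]; ring
    rw [Finset.sum_congr rfl hterm, Finset.sum_add_distrib, Finset.sum_range_sub', hst, hend]
    rw [show 2 * (2 * π / 3) = 2 * π - 2 * π / 3 by ring, show 2 * (π / 3) = 2 * π / 3 by ring, sin_two_pi_sub, sin_two_pi_three]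
    simp
    ring

/-- Explicit formula for the area of the largest `n`-gon inscribed in `M`. -/
theorem astar_eq (n : ℕ) (hn : 3 ≤ n) :
    astar n = Real.sqrt 3 / 2 + (((n : ℝ) - 2) / 2) * Real.sin (2 * π / (3 * ((n : ℝ) - 2))) := by
  obtain ⟨k, rfl⟩ : ∃ k, n = k + 3 := ⟨n - 3, by omega⟩
  have hg : IsGreatest {a : ℝ | ∃ S : Finset Pt, (S : Set Pt) ⊆ M ∧ S.card ≤ k + 3 ∧
      a = (volume (convexHull ℝ (S : Set Pt))).toReal}
      ((√3 + (k + 1 : ℕ) * sin (2 * π / (3 * (k + 1 : ℕ)))) / 2) := by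
    refine ⟨lower k, ?_⟩
    rintro _ ⟨S, hS, hc, rfl⟩
    exact upper_finset k S hS hc
  rw [astar, hg.csSup_eq]
  have : ((k + 3 : ℕ) : ℝ) - 2 = (k + 1 : ℕ) := by push_cast; ring
  rw [this]
  ring
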